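/- (Truthfulness of the prioritized egalitarian mechanism.) Fix a priority order σ and MRF valuations f_1,…,f_n on a finite item set M. Let v be an agent and let f'_v be any MRF valuation on M. If A is a non-redundant σ-Lorenz dominating allocation for the profile (f_1,…,f_n), and A' is a non-redundant σ-Lorenz dominating allocation for the profile in which f_v is replaced by f'_v (other valuations unchanged), then f_v(A_v) ≥ f_v(A'_v). In particular, any mechanism that outputs a non-redundant σ-Lorenz dominating allocation for the reported MRF valuations gives every agent weakly higher true value under truthful reporting than under any MRF misreport. -/

import Mathlib

open Finset
open scoped Classical

variable {n : ℕ} {I : Type*} [DecidableEq I] [Fintype I]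

/-- An allocation assigns pairwise disjoint bundles of items to the agents
(items may remain unallocated). -/
def IsAllocation (A : Fin n → Finset I) : Prop :=
  ∀ i j : Fin n, i ≠ j → Disjoint (A i) (A j)

/-- The vector of utilities of an allocation under a profile of valuations. -/
def util {α : Type*} (f : Fin n → Finset I → α) (A : Fin n → Finset I) : Fin n → α :=
  fun i => f i (A i)

/-- The entries of the vector `u`, sorted in nondecreasing order. -/
noncomputable def sortedVec {α : Type*} [LinearOrder α] (u : Fin n → α) : List α :=
  (Finset.univ.val.map u).sort (· ≤ ·)

/-- `u` Lorenz-dominates `v`: for each `k`, the sum of the `k` smallest entries of `u`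
is at least the sum of the `k` smallest entries of `v`. -/
def LorenzGE {α : Type*} [LinearOrder α] [AddCommMonoid α] (u v : Fin n → α) : Prop :=
  ∀ k : ℕ, ((sortedVec v).take k).sum ≤ ((sortedVec u).take k).sum

/-- A matroid rank function: a normalized submodular valuation with dichotomous marginals. -/
structure IsMRF (f : Finset I → ℕ) : Prop where
  empty : f ∅ = 0
  submod : ∀ S T : Finset I, S ⊆ T → ∀ a : I,
      f (insert a T) + f S ≤ f (insert a S) + f T
  dichot : ∀ (S : Finset I) (a : I), f (insert a S) = f S ∨ f (insert a S) = f S + 1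

/-- Non-redundancy: removing any item from any agent's bundle strictly decreases its value. -/
def NonRedundant (f : Fin n → Finset I → ℕ) (A : Fin n → Finset I) : Prop :=
  ∀ i : Fin n, ∀ a ∈ A i, f i ((A i).erase a) < f i (A i)

/-- A Lorenz dominating allocation. -/
def LorenzDominating (f : Fin n → Finset I → ℕ) (A : Fin n → Finset I) : Prop :=
  ∀ B : Fin n → Finset I, IsAllocation B → LorenzGE (util f A) (util f B)

/-- The σ-perturbed utilities: agent `i` gets `f i (A i) + σ(i)/n²`, where the priority
`σ(i)` ranges over `{1,…,n}`. -/
noncomputable def pUtil (σ : Equiv.Perm (Fin n)) (f : Fin n → Finset I → ℕ)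
    (A : Fin n → Finset I) : Fin n → ℝ :=
  fun i => (f i (A i) : ℝ) + (((σ i : ℕ) : ℝ) + 1) / (n : ℝ) ^ 2

/-- A σ-Lorenz dominating allocation. -/
def SigmaLorenzDom (σ : Equiv.Perm (Fin n)) (f : Fin n → Finset I → ℕ)
    (A : Fin n → Finset I) : Prop :=
  ∀ B : Fin n → Finset I, IsAllocation B → LorenzGE (pUtil σ f A) (pUtil σ f B)

/-- Restriction of a valuation to a subset `D` of the items. -/
def restrictVal (f : Finset I → ℕ) (D : Finset I) : Finset I → ℕ := fun S => f (S ∩ D)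

/-- A partition of all the items into `n` (possibly empty) bundles. -/
def IsPartition (P : Fin n → Finset I) : Prop :=
  (∀ i j : Fin n, i ≠ j → Disjoint (P i) (P j)) ∧ ∀ a : I, ∃ j, a ∈ P j

/-- An XOS valuation: the pointwise maximum of a finite nonempty family of
nonnegative additive valuations. -/
def IsXOS (f : Finset I → ℝ) : Prop :=
  ∃ (k : ℕ) (w : Fin (k + 1) → I → ℝ),
    (∀ t a, 0 ≤ w t a) ∧
    ∀ S : Finset I, f S = Finset.univ.sup' Finset.univ_nonempty (fun t => ∑ a ∈ S, w t a)

/-- A dichotomous valuation (real-valued version). -/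
def IsDichotomousR (f : Finset I → ℝ) : Prop :=
  ∀ (S : Finset I) (a : I), f (insert a S) = f S ∨ f (insert a S) = f S + 1

/-- Envy-freeness up to one good. -/
def EF1 (f : Fin n → Finset I → ℝ) (A : Fin n → Finset I) : Prop :=
  ∀ i j : Fin n, f i (A j) ≤ f i (A i) ∨ ∃ e ∈ A j, f i ((A j).erase e) ≤ f i (A i)

/-- The maximum welfare attainable by a set `S` of agents. -/
noncomputable def maxWelfare (f : Fin n → Finset I → ℕ) (S : Finset (Fin n)) : ℕ :=
  Finset.sup (Finset.univ.filter fun B : Fin n → Finset I => IsAllocation B)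
    (fun B => ∑ j ∈ S, f j (B j))

/-- An allocation extended with index `none` for the set of unallocated items. -/
def extAlloc (A : Fin n → Finset I) : Option (Fin n) → Finset I
  | none => Finset.univ \ Finset.univ.biUnion A
  | some i => A i

/-!
Lorenz domination passes to the sums of entries clipped at any threshold, so under a σ-Lorenz
dominating allocation `A` an agent can be made better off only if somebody not much richer loses.
Combined with the exchange property of matroid rank functions this gives: if `w` has less in `A`
than in another allocation `C`, then some `j` has more in `A` than in `C`, and its perturbed
utility in `A` is less than one above that of `w`.

Suppose the misreport pays, and call an agent other than `v` a loser if the misreport lowers its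
utility. The fact above, applied to `A` at `v`, produces a loser; let `j` be a loser of lowest
perturbed utility in `A'`. Applied to `A'` at `j`, the fact produces an agent `i`, not `v` and
hardly richer than `j`, who gains from the misreport. Applied to `A` at `i`, it produces a loser
that is poorer in `A'` than `j`.

Non-redundancy says that the bundle `A' v` is independent for `f'`, so its reported value is its
cardinality, which bounds its true value: in `A'`, agent `v` looks at least as rich as it is.
-/

section Clipping

variable {α : Type*} [LinearOrder α] [AddCommMonoid α]

lemma sum_map_min_le_sum_take_add [IsOrderedAddMonoid α] (L : List α) (t : α) (k : ℕ) :
    (L.map (min · t)).sum ≤ (L.take k).sum + (L.drop k).length • t := by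
  have hdrop : ((L.drop k).map (min · t)).sum ≤ (L.drop k).length • t := by
    simpa only [List.length_map] using
      ((L.drop k).map (min · t)).sum_le_card_nsmul t
        (List.forall_mem_map.2 fun _ _ => min_le_right _ _)
  have htake : ((L.take k).map (min · t)).sum ≤ (L.take k).sum := by
    simpa using List.sum_le_sum (l := L.take k) (f := (min · t)) (g := id) (by simp)
  calc (L.map (min · t)).sum
      = ((L.take k).map (min · t)).sum + ((L.drop k).map (min · t)).sum := by
        rw [← List.sum_append, ← List.map_append, List.take_append_drop]
    _ ≤ _ := add_le_add htake hdrop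

lemma exists_sum_map_min_eq_sum_take_add {L : List α} (hL : L.Pairwise (· ≤ ·)) (t : α) :
    ∃ k, (L.map (min · t)).sum = (L.take k).sum + (L.drop k).length • t := by
  induction L with
  | nil => exact ⟨0, by simp⟩
  | cons x L ih =>
    obtain ⟨hxL, hL⟩ := List.pairwise_cons.1 hL
    rcases le_total x t with hxt | htx
    · obtain ⟨k, hk⟩ := ih hL
      exact ⟨k + 1, by simp [hk, hxt, add_assoc]⟩
    · have hconst : (x :: L).map (min · t) = List.replicate (x :: L).length t := by
        rw [← List.map_const']
        refine List.map_congr_left fun y hy => min_eq_right ?_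
        rcases List.mem_cons.1 hy with rfl | hy
        · exact htx
        · exact htx.trans (hxL y hy)
      exact ⟨0, by simp [hconst]⟩

end Clipping

section Lorenz

variable {α : Type*} [LinearOrder α]

lemma sum_map_sortedVec {β : Type*} [AddCommMonoid β] (u : Fin n → α) (g : α → β) :
    ((sortedVec u).map g).sum = ∑ i, g (u i) := by
  rw [← Multiset.sum_coe, ← Multiset.map_coe, sortedVec, Multiset.sort_eq, Multiset.map_map]
  rfl

lemma length_sortedVec (u : Fin n → α) : (sortedVec u).length = n := by
  simp [sortedVec]

variable [AddCommMonoid α]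

lemma LorenzGE.sum_min_le [IsOrderedAddMonoid α] {u w : Fin n → α} (h : LorenzGE u w) (t : α) :
    ∑ i, min (w i) t ≤ ∑ i, min (u i) t := by
  obtain ⟨k, hk⟩ :=
    exists_sum_map_min_eq_sum_take_add (L := sortedVec u) (Multiset.pairwise_sort _ _) t
  calc ∑ i, min (w i) t
      = ((sortedVec w).map (min · t)).sum := (sum_map_sortedVec w (min · t)).symm
    _ ≤ ((sortedVec w).take k).sum + (n - k) • t := by
        simpa [length_sortedVec] using sum_map_min_le_sum_take_add (sortedVec w) t k
    _ ≤ ((sortedVec u).take k).sum + (n - k) • t := by gcongr; exact h k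
    _ = ((sortedVec u).map (min · t)).sum := by simp [hk, length_sortedVec]
    _ = ∑ i, min (u i) t := sum_map_sortedVec u (min · t)

lemma LorenzGE.exists_lt_of_lt [IsOrderedCancelAddMonoid α] {u w : Fin n → α} (h : LorenzGE u w)
    {i : Fin n} (hi : u i < w i) : ∃ j, w j < u j ∧ w j ≤ u i := by
  by_contra! hno
  -- Clip at the lowest level of `w` above `u i`, which no decreasing entry crosses.
  obtain ⟨m, hm, hmin⟩ := exists_min_image (univ.filter fun j => u i < w j) w ⟨i, by simpa⟩
  simp only [mem_filter, mem_univ, true_and] at hm hmin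
  refine (h.sum_min_le (w m)).not_gt (sum_lt_sum (fun j _ => ?_) ⟨i, mem_univ i, ?_⟩)
  · rcases le_or_gt (u j) (w j) with hj | hj
    · exact min_le_min_right _ hj
    · rw [min_eq_right (hmin j (hno j hj))]
      exact min_le_right _ _
  · rw [min_eq_right (hmin i hi)]
    exact min_lt_of_left_lt hm

end Lorenz

namespace IsMRF

variable {α : Type*} [DecidableEq α] {g : Finset α → ℕ}

lemma monotone (hg : IsMRF g) : Monotone g :=
  monotone_iff_forall_le_insert.2 fun S a _ => by
    rcases hg.dichot S a with h | h <;> omega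

lemma insert_le_add_one (hg : IsMRF g) (S : Finset α) (a : α) : g (insert a S) ≤ g S + 1 := by
  rcases hg.dichot S a with h | h <;> omega

lemma le_erase_add_one (hg : IsMRF g) (S : Finset α) (a : α) : g S ≤ g (S.erase a) + 1 :=
  (hg.monotone (insert_erase_subset a S)).trans (hg.insert_le_add_one _ a)

lemma le_card (hg : IsMRF g) (S : Finset α) : g S ≤ S.card := by
  induction S using Finset.induction_on with
  | empty => exact hg.empty.le
  | insert a S ha ih =>
    rw [card_insert_of_notMem ha]
    exact (hg.insert_le_add_one S a).trans (Nat.add_le_add_right ih 1)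

lemma eq_card_of_erase_lt (hg : IsMRF g) {S : Finset α} (hS : ∀ a ∈ S, g (S.erase a) < g S) :
    g S = S.card := by
  refine (hg.le_card S).antisymm (Finset.induction_on' S (by simp) ?_)
  intro a T haS hTS haT hT
  have hsub := hg.submod T (S.erase a) (subset_erase.2 ⟨hTS, haT⟩) a
  rw [insert_erase haS] at hsub
  rw [card_insert_of_notMem haT]
  linarith [hS a haS]

lemma union_eq_of_forall_insert_eq (hg : IsMRF g) {S T : Finset α}
    (h : ∀ a ∈ T, g (insert a S) = g S) : g (T ∪ S) = g S := by
  refine Finset.induction_on' T (by simp) fun a U haT _ _ hU => ?_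
  rw [insert_union]
  have hsub := hg.submod S (U ∪ S) subset_union_right a
  have hmono := hg.monotone (subset_insert a (U ∪ S))
  linarith [h a haT]

lemma exists_insert_eq_add_one (hg : IsMRF g) {S T : Finset α} (h : g S < g T) :
    ∃ a ∈ T, g (insert a S) = g S + 1 := by
  by_contra! hno
  have hspan : g (T ∪ S) = g S :=
    hg.union_eq_of_forall_insert_eq fun a ha => (hg.dichot S a).resolve_right (hno a ha)
  exact ((hg.monotone subset_union_left).trans hspan.le).not_gt h

end IsMRF

section MoveItem

variable {α : Type*} [DecidableEq α] {B C : Fin n → Finset α} {w : Fin n} {a : α}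

/-- The allocation obtained from `B` by giving item `a` to agent `w`, taking it away from its
owner if there is one. -/
def moveItem (B : Fin n → Finset α) (w : Fin n) (a : α) : Fin n → Finset α :=
  Function.update (fun i => (B i).erase a) w (insert a (B w))

@[simp]
lemma moveItem_self : moveItem B w a w = insert a (B w) :=
  Function.update_self ..

lemma moveItem_of_ne {i : Fin n} (hi : i ≠ w) : moveItem B w a i = (B i).erase a :=
  Function.update_of_ne hi ..

lemma mem_moveItem {i : Fin n} {b : α} :
    b ∈ moveItem B w a i ↔ if b = a then i = w else b ∈ B i := by
  rcases eq_or_ne i w with rfl | hi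
  · by_cases hb : b = a <;> simp [hb]
  · by_cases hb : b = a <;> simp [moveItem_of_ne hi, hb, hi]

lemma isAllocation_moveItem (hB : IsAllocation B) (w : Fin n) (a : α) :
    IsAllocation (moveItem B w a) := by
  intro i j hij
  refine disjoint_left.2 fun b hbi hbj => ?_
  rw [mem_moveItem] at hbi hbj
  split_ifs at hbi hbj with hb
  · exact hij (hbi.trans hbj.symm)
  · exact disjoint_left.1 (hB i j hij) hbi hbj

lemma sum_card_sdiff_moveItem_lt (hC : IsAllocation C) (haC : a ∈ C w) (haB : a ∉ B w) :
    ∑ i, (C i \ moveItem B w a i).card < ∑ i, (C i \ B i).card := by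
  have hsub : ∀ i, C i \ moveItem B w a i ⊆ C i \ B i := by
    intro i b hb
    have hbi : b = a → i = w := by
      rintro rfl
      by_contra hiw
      exact disjoint_left.1 (hC i w hiw) (mem_sdiff.1 hb).1 haC
    grind [mem_moveItem]
  refine sum_lt_sum (fun i _ => card_le_card (hsub i)) ⟨w, mem_univ w, card_lt_card ?_⟩
  exact (ssubset_iff_of_subset (hsub w)).2 ⟨a, by simp [haC, haB], by simp⟩

end MoveItem

-- If the item given to `w` comes from an agent `k` who has no more than in `C`, then `k` is
-- compensated in turn; this stops because each move brings the allocation closer to `C`.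
lemma IsAllocation.exists_exchange {α : Type*} [DecidableEq α] {f : Fin n → Finset α → ℕ}
    (hf : ∀ i, IsMRF (f i)) {B C : Fin n → Finset α} (hB : IsAllocation B) (hC : IsAllocation C)
    {w : Fin n} (hw : f w (B w) < f w (C w)) :
    ∃ B', IsAllocation B' ∧ f w (B w) < f w (B' w) ∧ ∀ i, f i (B' i) < f i (B i) →
      f i (C i) < f i (B i) ∧ f i (B i) ≤ f i (B' i) + 1 := by
  induction hN : ∑ i, (C i \ B i).card using Nat.strong_induction_on generalizing B w with | _ N ih
  subst hN
  obtain ⟨a, haC, ha⟩ := (hf w).exists_insert_eq_add_one hw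
  have haB : a ∉ B w := fun h => by simp [insert_eq_of_mem h] at ha
  have hgain : f w (moveItem B w a w) = f w (B w) + 1 := by rw [moveItem_self, ha]
  have hloss : ∀ i ≠ w, f i (B i) ≤ f i (moveItem B w a i) + 1 := fun i hi => by
    rw [moveItem_of_ne hi]
    exact (hf i).le_erase_add_one _ a
  by_cases hpoor : ∃ k ≠ w, f k (moveItem B w a k) < f k (B k) ∧ f k (B k) ≤ f k (C k)
  · obtain ⟨k, hkw, hk, hkC⟩ := hpoor
    have hak : a ∈ B k := by
      by_contra h
      simp [moveItem_of_ne hkw, erase_eq_of_notMem h] at hk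
    have hother : ∀ i ≠ w, i ≠ k → moveItem B w a i = B i := fun i hiw hik => by
      rw [moveItem_of_ne hiw, erase_eq_of_notMem (disjoint_right.1 (hB i k hik) hak)]
    obtain ⟨B', hB', hgain', hloss'⟩ :=
      ih _ (sum_card_sdiff_moveItem_lt hC haC haB) (isAllocation_moveItem hB w a)
        (hk.trans_le hkC) rfl
    have hwB' : f w (B w) < f w (B' w) := by grind
    refine ⟨B', hB', hwB', fun i hi => ?_⟩
    have hik : i ≠ k := by grind
    have hiw : i ≠ w := by grind
    simpa only [hother i hiw hik] using hloss' i (by rwa [hother i hiw hik])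
  · push Not at hpoor
    refine ⟨moveItem B w a, isAllocation_moveItem hB w a, by omega, fun i hi => ?_⟩
    have hiw : i ≠ w := by grind
    exact ⟨hpoor i hiw hi, hloss i hiw⟩

section PerturbedUtility

variable {α : Type*} {σ : Equiv.Perm (Fin n)} {f g : Fin n → Finset α → ℕ}
  {A B : Fin n → Finset α} {i k : Fin n}

lemma pUtil_lt_pUtil_iff : pUtil σ f A i < pUtil σ g B i ↔ f i (A i) < g i (B i) := by
  simp [pUtil]

lemma pUtil_le_pUtil_add_one_iff :
    pUtil σ f A i ≤ pUtil σ g B i + 1 ↔ f i (A i) ≤ g i (B i) + 1 := by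
  simp only [pUtil, add_right_comm _ _ (1 : ℝ), add_le_add_iff_right]
  norm_cast

lemma pUtil_add_one_le_pUtil_iff :
    pUtil σ f A i + 1 ≤ pUtil σ g B i ↔ f i (A i) < g i (B i) := by
  simp only [pUtil, add_right_comm _ _ (1 : ℝ), add_le_add_iff_right]
  norm_cast

lemma eq_of_pUtil_eq_pUtil_add_intCast {m : ℤ} (h : pUtil σ f A k = pUtil σ g B i + m) :
    k = i := by
  have hn : (n : ℝ) ≠ 0 := Nat.cast_ne_zero.2 i.pos.ne'
  have hdvd : (n : ℤ) ^ 2 ∣ (σ k : ℤ) - (σ i : ℤ) := by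
    refine ⟨g i (B i) + m - f k (A k), ?_⟩
    unfold pUtil at h
    field_simp at h
    rify
    linear_combination h
  have hlt : |(σ k : ℤ) - (σ i : ℤ)| < (n : ℤ) ^ 2 := by
    rw [abs_lt]
    constructor <;> nlinarith [(σ k).isLt, (σ i).isLt]
  have hσ := Int.eq_zero_of_abs_lt_dvd hdvd hlt
  exact σ.injective (Fin.ext (by omega))

end PerturbedUtility

lemma SigmaLorenzDom.exists_lt_of_lt {α : Type*} [DecidableEq α] {σ : Equiv.Perm (Fin n)}
    {f : Fin n → Finset α → ℕ} (hf : ∀ i, IsMRF (f i)) {A C : Fin n → Finset α}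
    (hA : IsAllocation A) (hLD : SigmaLorenzDom σ f A) (hC : IsAllocation C)
    {w : Fin n} (hw : f w (A w) < f w (C w)) :
    ∃ j, f j (C j) < f j (A j) ∧ pUtil σ f A j < pUtil σ f A w + 1 := by
  obtain ⟨B, hB, hgain, hloss⟩ := hA.exists_exchange hf hC hw
  obtain ⟨j, hj, hjw⟩ := (hLD B hB).exists_lt_of_lt (pUtil_lt_pUtil_iff.2 hgain)
  rw [pUtil_lt_pUtil_iff] at hj
  obtain ⟨hjC, hj_one⟩ := hloss j hj
  refine ⟨j, hjC, lt_of_le_of_ne ?_ fun heq => ?_⟩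
  · linarith [pUtil_le_pUtil_add_one_iff (σ := σ).2 hj_one]
  · obtain rfl : j = w := eq_of_pUtil_eq_pUtil_add_intCast (m := 1) (by simpa using heq)
    exact hj.not_gt hgain

theorem PE_truthful_general {n : ℕ} {α : Type*} [DecidableEq α] {σ : Equiv.Perm (Fin n)}
    {f : Fin n → Finset α → ℕ} (hf : ∀ i, IsMRF (f i))
    {v : Fin n} {f' : Finset α → ℕ} (hf' : IsMRF f')
    {A : Fin n → Finset α} (hA : IsAllocation A) (hLD : SigmaLorenzDom σ f A)
    {A' : Fin n → Finset α} (hA' : IsAllocation A')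
    (hLD' : SigmaLorenzDom σ (Function.update f v f') A')
    (hv : f v (A' v) ≤ f' (A' v)) :
    f v (A' v) ≤ f v (A v) := by
  set g := Function.update f v f' with hg_def
  have hg : ∀ i, IsMRF (g i) :=
    (Function.forall_update_iff f fun _ => IsMRF).2 ⟨hf', fun i _ => hf i⟩
  have hgf : ∀ i ≠ v, g i = f i := fun i hi => Function.update_of_ne hi ..
  by_contra! hlt
  have hv_gain : pUtil σ f A v + 1 ≤ pUtil σ g A' v :=
    pUtil_add_one_le_pUtil_iff.2 (by simpa [hg_def] using hlt.trans_le hv)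
  let losers := univ.filter fun j => j ≠ v ∧ f j (A' j) < f j (A j)
  have mem_losers : ∀ {j}, j ∈ losers ↔ j ≠ v ∧ f j (A' j) < f j (A j) := by simp [losers]
  have exists_loser : ∀ w, f w (A w) < f w (A' w) →
      ∃ j ∈ losers, pUtil σ f A j < pUtil σ f A w + 1 := fun w hw => by
    obtain ⟨j, hj, hjw⟩ := SigmaLorenzDom.exists_lt_of_lt hf hA hLD hA' hw
    exact ⟨j, mem_losers.2 ⟨by rintro rfl; exact hj.not_gt hlt, hj⟩, hjw⟩
  obtain ⟨j₀, hj₀, hj₀v⟩ := exists_loser v hlt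
  obtain ⟨j, hj, hjmin⟩ := exists_min_image losers (pUtil σ g A') ⟨j₀, hj₀⟩
  have loser_ge : ∀ k ∈ losers, pUtil σ g A' j + 1 ≤ pUtil σ f A k := fun k hk => by
    obtain ⟨hkv, hk_lt⟩ := mem_losers.1 hk
    have hk_gap : pUtil σ g A' k + 1 ≤ pUtil σ f A k :=
      pUtil_add_one_le_pUtil_iff.2 (by rwa [hgf k hkv])
    linarith [hjmin k hk]
  obtain ⟨hjv, hj_lt⟩ := mem_losers.1 hj
  obtain ⟨i, hi, hij⟩ :=
    SigmaLorenzDom.exists_lt_of_lt hg hA' hLD' hA (w := j) (by rwa [hgf j hjv])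
  have hiv : i ≠ v := by
    rintro rfl
    linarith [loser_ge j₀ hj₀]
  rw [hgf i hiv] at hi
  obtain ⟨k, hk, hki⟩ := exists_loser i hi
  have hi_gain : pUtil σ f A i + 1 ≤ pUtil σ g A' i :=
    pUtil_add_one_le_pUtil_iff.2 (by rwa [hgf i hiv])
  linarith [loser_ge k hk]

/-- Truthfulness of the prioritized egalitarian mechanism: an agent with an MRF valuation
cannot gain (in true value) by reporting a different MRF valuation. -/
theorem PE_truthful
    {n : ℕ} {I : Type*} [DecidableEq I] [Fintype I]
    (σ : Equiv.Perm (Fin n))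
    (f : Fin n → Finset I → ℕ) (hf : ∀ i, IsMRF (f i))
    (v : Fin n) (f' : Finset I → ℕ) (hf' : IsMRF f')
    (A : Fin n → Finset I) (hA : IsAllocation A)
    (hNR : NonRedundant f A) (hLD : SigmaLorenzDom σ f A)
    (A' : Fin n → Finset I) (hA' : IsAllocation A')
    (hNR' : NonRedundant (Function.update f v f') A')
    (hLD' : SigmaLorenzDom σ (Function.update f v f') A') :
    f v (A' v) ≤ f v (A v) :=
  PE_truthful_general hf hf' hA hLD hA' hLD'
    (((hf v).le_card _).trans_eq (hf'.eq_card_of_erase_lt (by simpa using hNR' v)).symm)
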